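/- arXiv:2009.00390 — 2 statements merged into one kernel-verified Lean document; each statement's English description precedes it below -/
import Mathlib

section
/- Let a, b ∈ A satisfy a * a = −1, b * b = 1, and a * b = −(b * a). Set m₁ = −a and m₂ = cosh(θ/2) • a + sinh(θ/2) • b (so m₁⁻¹ = a and m₂⁻¹ = −m₂). Then the nested double flip acts as a boost with rapidity θ in the a-b plane: for all x, y ∈ ℝ, (cosh(θ/2) • a + sinh(θ/2) • b) * ( ((−a) * (x • a + y • b)) * a ) * ( −(cosh(θ/2) • a + sinh(θ/2) • b) ) = (x cosh θ + y sinh θ) • a + (x sinh θ + y cosh θ) • b. -/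
/-!
If `u * u` and `u * v + v * u` are scalars, then `v ↦ u * v * u` is, up to the factor `u * u`, the
reflection of `v` in the line of `u`, exactly as in a Clifford algebra. The two flips are the
reflections attached to the vectors `a` and `c • a + s • b` of the `a`-`b` plane. For
`c = cosh (θ / 2)` and `s = sinh (θ / 2)` these vectors are at hyperbolic angle `θ / 2`, so the
composite is the hyperbolic rotation by `θ`.
-/

section Flip

variable {R A : Type*} [CommRing R] [Ring A] [Algebra R A]

lemma mul_mul_self_of_mul_add_mul_eq_smul_one {u v : A} {p q : R}
    (huu : u * u = q • 1) (huv : u * v + v * u = p • 1) :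
    u * v * u = p • u - q • v :=
  calc u * v * u = (u * v + v * u) * u - v * (u * u) := by noncomm_ring
    _ = p • u - q • v := by rw [huv, huu, smul_one_mul, mul_smul_one]

variable {a b : A}

lemma neg_mul_smul_add_smul_mul_self (ha : a * a = -1) (hab : a * b = -(b * a)) (x y : R) :
    -a * (x • a + y • b) * a = x • a - y • b := by
  have haa : a * a = (-1 : R) • (1 : A) := by rw [ha, neg_one_smul]
  have hav : a * (x • a + y • b) + (x • a + y • b) * a = (-2 * x) • (1 : A) := by
    simp only [mul_add, add_mul, mul_smul_comm, smul_mul_assoc, ha, hab]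
    module
  rw [neg_mul, neg_mul, mul_mul_self_of_mul_add_mul_eq_smul_one haa hav]
  module

lemma smul_add_smul_mul_smul_add_smul (ha : a * a = -1) (hb : b * b = 1)
    (hab : a * b = -(b * a)) (c s x y : R) :
    (c • a + s • b) * (x • a + y • b) = (s * y - c * x) • (1 : A) + (s * x - c * y) • (b * a) := by
  simp only [mul_add, add_mul, mul_smul_comm, smul_mul_assoc, ha, hb, hab]
  module

lemma smul_add_smul_mul_mul_self (ha : a * a = -1) (hb : b * b = 1) (hab : a * b = -(b * a))
    (c s x y : R) :
    (c • a + s • b) * (x • a + y • b) * (c • a + s • b) =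
      (2 * (s * y - c * x)) • (c • a + s • b) - (s ^ 2 - c ^ 2) • (x • a + y • b) := by
  apply mul_mul_self_of_mul_add_mul_eq_smul_one
  all_goals
    simp only [smul_add_smul_mul_smul_add_smul ha hb hab]
    module

theorem nested_flip_boost_general (ha : a * a = -1) (hb : b * b = 1) (hab : a * b = -(b * a))
    (c s x y : R) :
    (c • a + s • b) * (-a * (x • a + y • b) * a) * -(c • a + s • b) =
      (x * (c ^ 2 + s ^ 2) + y * (2 * s * c)) • a +
        (x * (2 * s * c) + y * (c ^ 2 + s ^ 2)) • b := by
  rw [neg_mul_smul_add_smul_mul_self ha hab, sub_eq_add_neg, ← neg_smul, mul_neg,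
    smul_add_smul_mul_mul_self ha hb hab]
  module

end Flip

theorem nested_flip_boost {A : Type*} [Ring A] [Algebra ℝ A] (a b : A)
    (ha : a * a = -1) (hb : b * b = 1) (hab : a * b = -(b * a)) (θ x y : ℝ) :
    (Real.cosh (θ / 2) • a + Real.sinh (θ / 2) • b) * (((-a) * (x • a + y • b)) * a) *
        (-(Real.cosh (θ / 2) • a + Real.sinh (θ / 2) • b)) =
      (x * Real.cosh θ + y * Real.sinh θ) • a + (x * Real.sinh θ + y * Real.cosh θ) • b := by
  rw [nested_flip_boost_general ha hb hab, ← Real.cosh_two_mul, ← Real.sinh_two_mul,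
    mul_div_cancel₀ θ two_ne_zero]
end

section
/- Let A be a 2×2 real matrix and a a quaternion. Form the 4×4 quaternionic matrices X = fromBlocks (A.map ↑) ((star a) • 1) (a • 1) (−((adjugate A).map ↑)) and X̃ = fromBlocks ((adjugate A).map ↑) ((star a) • 1) (a • 1) (−(A.map ↑)) (X̃ is the trace reversal of X, using that split-quaternion conjugation corresponds to the adjugate). Then X * X̃ = (det A + normSq a) • 1 and X̃ * X = (det A + normSq a) • 1. This realizes the Clifford relation for the split-quaternion⊗quaternion cell of the 2×2 magic square, whose quadratic form det A + normSq a has signature (6,2). -/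
open scoped Quaternion

/-!
In the block product of `X` and `X̃` the diagonal blocks are `A * adjugate A + star a * a` and
`a * star a + adjugate A * A`, both equal to the scalar `det A + normSq a`. The off-diagonal blocks
are commutators of a real matrix with a quaternionic scalar matrix, which vanish because the reals
are central in `ℍ`. The same computation works for square matrices over any commutative ring and
elements `p`, `q` of an algebra over it whose products `p * q` and `q * p` are the same scalar.
-/

theorem fromBlocks_mul_fromBlocks_of_commute {n S : Type*} [Fintype n] [NonUnitalNonAssocRing S]
    {M N P Q : Matrix n n S} (hMN : Commute M N) (hPQ : Commute P Q) (hMP : Commute M P)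
    (hNQ : Commute N Q) :
    Matrix.fromBlocks M P Q (-N) * Matrix.fromBlocks N P Q (-M) =
      Matrix.fromBlocks (M * N + P * Q) 0 0 (M * N + P * Q) := by
  simp only [Matrix.fromBlocks_multiply, mul_neg, neg_mul, neg_neg, hMP.eq, hNQ.eq, hMN.eq, hPQ.eq,
    add_neg_cancel, add_comm (Q * P)]

section Semiring

variable {n R S : Type*} [Fintype n] [DecidableEq n] [CommSemiring R] [Semiring S] [Algebra R S]

theorem commute_map_algebraMap_smul_one (M : Matrix n n R) (s : S) :
    Commute (M.map (algebraMap R S)) (s • (1 : Matrix n n S)) := by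
  rw [Matrix.smul_one_eq_diagonal]
  refine Commute.symm (Matrix.scalar_commute_iff.mpr ?_)
  ext i j
  exact (Algebra.commutes (M i j) s).symm

theorem map_algebraMap_mul_of_mul_eq_smul_one {M N : Matrix n n R} {d : R} (h : M * N = d • 1) :
    M.map (algebraMap R S) * N.map (algebraMap R S) = d • (1 : Matrix n n S) := by
  let φ : Matrix n n R →ₐ[R] Matrix n n S := (Algebra.ofId R S).mapMatrix
  calc φ M * φ N = φ (d • 1) := by rw [← map_mul, h]
    _ = d • 1 := by rw [map_smul, map_one]

theorem smul_one_mul_smul_one_of_mul_eq_algebraMap {p q : S} {r : R}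
    (h : p * q = algebraMap R S r) :
    (p • (1 : Matrix n n S)) * (q • (1 : Matrix n n S)) = r • (1 : Matrix n n S) := by
  rw [smul_mul_assoc, one_mul, smul_smul, h, algebraMap_smul]

end Semiring

theorem fromBlocks_mul_fromBlocks_of_mul_eq_smul_one {n R S : Type*} [Fintype n] [DecidableEq n]
    [CommSemiring R] [Ring S] [Algebra R S] {M N : Matrix n n R} {d : R}
    (hMN : M * N = d • 1) (hNM : N * M = d • 1) {p q : S} {r : R}
    (hpq : p * q = algebraMap R S r) (hqp : q * p = algebraMap R S r) :
    Matrix.fromBlocks (M.map (algebraMap R S)) (p • 1) (q • 1) (-(N.map (algebraMap R S))) *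
        Matrix.fromBlocks (N.map (algebraMap R S)) (p • 1) (q • 1) (-(M.map (algebraMap R S))) =
      (d + r) • (1 : Matrix (n ⊕ n) (n ⊕ n) S) := by
  have hMN' := map_algebraMap_mul_of_mul_eq_smul_one (S := S) hMN
  have hNM' := map_algebraMap_mul_of_mul_eq_smul_one (S := S) hNM
  have hpq' := smul_one_mul_smul_one_of_mul_eq_algebraMap (n := n) hpq
  have hqp' := smul_one_mul_smul_one_of_mul_eq_algebraMap (n := n) hqp
  rw [fromBlocks_mul_fromBlocks_of_commute (hMN'.trans hNM'.symm) (hpq'.trans hqp'.symm)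
      (commute_map_algebraMap_smul_one M p) (commute_map_algebraMap_smul_one N q),
    hMN', hpq', ← add_smul, ← Matrix.fromBlocks_one, Matrix.fromBlocks_smul, smul_zero]

theorem vector_matrix_clifford_relation_split_quaternion_general {n R S : Type*} [Fintype n]
    [DecidableEq n] [CommRing R] [Ring S] [Algebra R S] (A : Matrix n n R) {p q : S} {r : R}
    (hpq : p * q = algebraMap R S r) (hqp : q * p = algebraMap R S r) :
    (Matrix.fromBlocks (A.map (algebraMap R S)) (p • 1) (q • 1)
          (-((A.adjugate).map (algebraMap R S))) *
        Matrix.fromBlocks ((A.adjugate).map (algebraMap R S)) (p • 1) (q • 1)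
          (-(A.map (algebraMap R S))) =
      (A.det + r) • (1 : Matrix (n ⊕ n) (n ⊕ n) S)) ∧
    (Matrix.fromBlocks ((A.adjugate).map (algebraMap R S)) (p • 1) (q • 1)
          (-(A.map (algebraMap R S))) *
        Matrix.fromBlocks (A.map (algebraMap R S)) (p • 1) (q • 1)
          (-((A.adjugate).map (algebraMap R S))) =
      (A.det + r) • (1 : Matrix (n ⊕ n) (n ⊕ n) S)) :=
  ⟨fromBlocks_mul_fromBlocks_of_mul_eq_smul_one A.mul_adjugate A.adjugate_mul hpq hqp,
    fromBlocks_mul_fromBlocks_of_mul_eq_smul_one A.adjugate_mul A.mul_adjugate hpq hqp⟩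

theorem vector_matrix_clifford_relation_split_quaternion
    (A : Matrix (Fin 2) (Fin 2) ℝ) (a : ℍ[ℝ]) :
    (Matrix.fromBlocks (A.map (algebraMap ℝ ℍ[ℝ])) ((star a) • 1) (a • 1)
          (-((A.adjugate).map (algebraMap ℝ ℍ[ℝ]))) *
        Matrix.fromBlocks ((A.adjugate).map (algebraMap ℝ ℍ[ℝ])) ((star a) • 1) (a • 1)
          (-(A.map (algebraMap ℝ ℍ[ℝ]))) =
      (A.det + Quaternion.normSq a) • (1 : Matrix (Fin 2 ⊕ Fin 2) (Fin 2 ⊕ Fin 2) ℍ[ℝ])) ∧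
    (Matrix.fromBlocks ((A.adjugate).map (algebraMap ℝ ℍ[ℝ])) ((star a) • 1) (a • 1)
          (-(A.map (algebraMap ℝ ℍ[ℝ]))) *
        Matrix.fromBlocks (A.map (algebraMap ℝ ℍ[ℝ])) ((star a) • 1) (a • 1)
          (-((A.adjugate).map (algebraMap ℝ ℍ[ℝ]))) =
      (A.det + Quaternion.normSq a) • (1 : Matrix (Fin 2 ⊕ Fin 2) (Fin 2 ⊕ Fin 2) ℍ[ℝ])) :=
  vector_matrix_clifford_relation_split_quaternion_general A
    (Quaternion.star_mul_self a) (Quaternion.self_mul_star a)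
end
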